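/- Rigidity of right-angled Artin groups (Droms): For finite simple graphs Γ and Δ, the right-angled Artin groups A(Γ) and A(Δ) are isomorphic as groups if and only if Γ and Δ are isomorphic as graphs. -/

import Mathlib

/-- The relators of the right-angled Artin group on a simple graph `Γ`:
one commutator for each edge. -/
def raagRels {V : Type*} (Γ : SimpleGraph V) : Set (FreeGroup V) :=
  {r | ∃ u v : V, Γ.Adj u v ∧
    r = FreeGroup.of u * FreeGroup.of v * (FreeGroup.of u)⁻¹ * (FreeGroup.of v)⁻¹}

/-!
Fix a field `F`. The cup product on `H¹(A(Γ); F)` is a group invariant: `χ ∪ η = 0` iff `(χ, η)`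
lifts to a homomorphism into the Heisenberg group over `F`. In terms of the values `α`, `β` of `χ`,
`η` on the vertices, it says that `(α u, β u)` and `(α v, β v)` are linearly dependent for every
edge `uv`. It thus suffices to recover `Γ` from the space `V → F` with this relation.

The annihilator of the basis vector at `s` has dimension equal to the number `codegree s` of
vertices not adjacent to `s`, and every vector whose support contains `s` has an annihilator of
dimension at most `codegree s`. Hence a linear isomorphism `φ` preserving the relation is block
triangular with respect to the codegree. Some bijection `σ` of the vertices picks out nonzero
entries of the matrix of `φ`, and it preserves codegrees. If `σ v`, `σ w` are adjacent while `v`,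
`w` are not, then the images of the basis vectors at `v` and `w` are linearly dependent on all
vertices of codegree at most `codegree v`, which contradicts block triangularity of `φ⁻¹`. So `σ⁻¹`
maps edges to edges, and `σ` is an isomorphism because it preserves codegrees.
-/

section Transversal

variable {V W R : Type*} [CommRing R]

theorem exists_perm_forall_apply_ne_zero_of_det_ne_zero {n : Type*} [Fintype n] [DecidableEq n]
    {M : Matrix n n R} (hM : M.det ≠ 0) : ∃ σ : Equiv.Perm n, ∀ i, M (σ i) i ≠ 0 := by
  rw [Matrix.det_apply] at hM
  obtain ⟨σ, -, hσ⟩ := Finset.exists_ne_zero_of_sum_ne_zero hM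
  refine ⟨σ, fun i hi => hσ ?_⟩
  have hprod : ∏ j, M (σ j) j = 0 := Finset.prod_eq_zero (Finset.mem_univ i) hi
  rw [hprod, smul_zero]

theorem exists_equiv_forall_apply_single_ne_zero [Finite V] [Finite W] [DecidableEq V]
    [Nontrivial R] (φ : (V → R) ≃ₗ[R] (W → R)) :
    ∃ σ : V ≃ W, ∀ v, φ (Pi.single v 1) (σ v) ≠ 0 := by
  have := Fintype.ofFinite V
  have := Fintype.ofFinite W
  have hcard : Fintype.card V = Fintype.card W := by simpa using φ.finrank_eq
  let e : V ≃ W := Fintype.equivOfCardEq hcard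
  let ψ : (V → R) ≃ₗ[R] (V → R) := φ ≪≫ₗ LinearEquiv.funCongrLeft R R e
  have hdet : (LinearMap.toMatrix' (ψ : (V → R) →ₗ[R] (V → R))).det ≠ 0 := by
    rw [LinearMap.det_toMatrix']
    exact ψ.isUnit_det'.ne_zero
  obtain ⟨τ, hτ⟩ := exists_perm_forall_apply_ne_zero_of_det_ne_zero hdet
  exact ⟨τ.trans e, fun v => by
    simpa [LinearMap.toMatrix'_apply, ψ, LinearEquiv.funCongrLeft, LinearMap.funLeft] using hτ v⟩

theorem apply_equiv_le_of_forall_le {P : Type*} [Preorder P] [Finite V] {f : V → P} {g : W → P}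
    (σ : V ≃ W) (τ : W ≃ V) (hσ : ∀ v, f v ≤ g (σ v)) (hτ : ∀ w, g w ≤ f (τ w)) (v : V) :
    g (σ v) ≤ f v := by
  let π : Equiv.Perm V := σ.trans τ
  have hπ : ∀ (n : ℕ) (v : V), f v ≤ f ((π ^ n) v) := by
    intro n
    induction n with
    | zero => exact fun v => le_rfl
    | succ n ih => exact fun v => ((hσ v).trans (hτ (σ v))).trans (ih (π v))
  calc g (σ v) ≤ f (π v) := hτ (σ v)
    _ ≤ f ((π ^ (orderOf π - 1)) (π v)) := hπ _ _
    _ = f v := by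
      rw [← Equiv.Perm.mul_apply, pow_sub_one_mul (orderOf_pos π).ne', pow_orderOf_eq_one,
        Equiv.Perm.one_apply]

end Transversal

/-- The right-angled Artin group `A(Γ)`. -/
abbrev RAAG {V : Type*} (Γ : SimpleGraph V) : Type _ :=
  PresentedGroup (raagRels Γ)

namespace RAAG

variable {V W G : Type*} [Group G] {Γ : SimpleGraph V} {Δ : SimpleGraph W}

theorem lift_eq_one_of_mem_raagRels {f : V → G}
    (hf : ∀ u v, Γ.Adj u v → Commute (f u) (f v)) :
    ∀ r ∈ raagRels Γ, FreeGroup.lift f r = 1 := by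
  rintro _ ⟨u, v, huv, rfl⟩
  simpa [← commutatorElement_def, commutatorElement_eq_one_iff_commute] using hf u v huv

/-- The homomorphism out of `A(Γ)` with prescribed values on the vertices. -/
def lift (f : V → G) (hf : ∀ u v, Γ.Adj u v → Commute (f u) (f v)) : RAAG Γ →* G :=
  PresentedGroup.toGroup (lift_eq_one_of_mem_raagRels hf)

@[simp]
theorem lift_of (f : V → G) (hf : ∀ u v, Γ.Adj u v → Commute (f u) (f v)) (v : V) :
    lift f hf (PresentedGroup.of v) = f v :=
  PresentedGroup.toGroup.of (lift_eq_one_of_mem_raagRels hf)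

theorem commute_of_adj {u v : V} (h : Γ.Adj u v) :
    Commute (PresentedGroup.of u : RAAG Γ) (PresentedGroup.of v) := by
  rw [← commutatorElement_eq_one_iff_commute]
  exact PresentedGroup.one_of_mem ⟨u, v, h, rfl⟩

/-- The isomorphism of right-angled Artin groups induced by an isomorphism of graphs. -/
def congr (e : Γ ≃g Δ) : RAAG Γ ≃* RAAG Δ :=
  MonoidHom.toMulEquiv
    (lift (fun v => PresentedGroup.of (e v)) fun _ _ h => commute_of_adj (e.map_adj_iff.mpr h))
    (lift (fun w => PresentedGroup.of (e.symm w))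
      fun _ _ h => commute_of_adj (e.symm.map_adj_iff.mpr h))
    (PresentedGroup.ext fun v => by simp)
    (PresentedGroup.ext fun w => by simp)

end RAAG

/-- The Heisenberg group of upper unitriangular `3 × 3` matrices, with `fst`, `snd` and `central`
the entries in positions `(1, 2)`, `(2, 3)` and `(1, 3)`. -/
@[ext]
structure Heisenberg (R : Type*) where
  fst : R
  snd : R
  central : R

namespace Heisenberg

variable {R : Type*} [CommRing R]

instance : Mul (Heisenberg R) :=
  ⟨fun x y => ⟨x.fst + y.fst, x.snd + y.snd, x.central + y.central + x.fst * y.snd⟩⟩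

instance : One (Heisenberg R) := ⟨⟨0, 0, 0⟩⟩

instance : Inv (Heisenberg R) := ⟨fun x => ⟨-x.fst, -x.snd, -x.central + x.fst * x.snd⟩⟩

@[simp] theorem mul_fst (x y : Heisenberg R) : (x * y).fst = x.fst + y.fst := rfl

@[simp] theorem mul_snd (x y : Heisenberg R) : (x * y).snd = x.snd + y.snd := rfl

@[simp] theorem mul_central (x y : Heisenberg R) :
    (x * y).central = x.central + y.central + x.fst * y.snd := rfl

@[simp] theorem one_fst : (1 : Heisenberg R).fst = 0 := rfl

@[simp] theorem one_snd : (1 : Heisenberg R).snd = 0 := rfl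

@[simp] theorem one_central : (1 : Heisenberg R).central = 0 := rfl

@[simp] theorem inv_fst (x : Heisenberg R) : x⁻¹.fst = -x.fst := rfl

@[simp] theorem inv_snd (x : Heisenberg R) : x⁻¹.snd = -x.snd := rfl

@[simp] theorem inv_central (x : Heisenberg R) :
    x⁻¹.central = -x.central + x.fst * x.snd := rfl

instance : Group (Heisenberg R) :=
  Group.ofLeftAxioms
    (fun x y z => by ext <;> simp only [mul_fst, mul_snd, mul_central] <;> ring)
    (fun x => by ext <;> simp)
    (fun x => by ext <;> simp)

theorem commute_iff {x y : Heisenberg R} : Commute x y ↔ x.fst * y.snd = y.fst * x.snd := by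
  simp [commute_iff_eq, Heisenberg.ext_iff, add_comm]

/-- The first coordinate, as a character. -/
def fstHom : Additive (Heisenberg R) →+ R where
  toFun x := x.toMul.fst
  map_zero' := rfl
  map_add' _ _ := rfl

/-- The second coordinate, as a character. -/
def sndHom : Additive (Heisenberg R) →+ R where
  toFun x := x.toMul.snd
  map_zero' := rfl
  map_add' _ _ := rfl

end Heisenberg

section Characters

variable {G H R : Type*} [Group G] [Group H] [CommRing R]

/-- The cup product of two characters of `G` vanishes in `H²(G; R)`. It is the class of the cocycle
`(g, h) ↦ χ g * η h`, and a cochain whose coboundary is, up to sign, this cocycle is the same as the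
central coordinate of a lift of `(χ, η)` to the Heisenberg group. -/
def CupVanishes (χ η : Additive G →+ R) : Prop :=
  ∃ ψ : G →* Heisenberg R,
    Heisenberg.fstHom.comp ψ.toAdditive = χ ∧ Heisenberg.sndHom.comp ψ.toAdditive = η

theorem CupVanishes.comp {χ η : Additive G →+ R} (h : CupVanishes χ η) (f : H →* G) :
    CupVanishes (χ.comp f.toAdditive) (η.comp f.toAdditive) := by
  obtain ⟨ψ, rfl, rfl⟩ := h
  exact ⟨ψ.comp f, rfl, rfl⟩

/-- Transport of characters along an isomorphism of groups. -/
def characterCongr (R : Type*) [CommRing R] (e : G ≃* H) :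
    (Additive G →+ R) ≃ₗ[R] (Additive H →+ R) where
  toFun χ := χ.comp e.symm.toMonoidHom.toAdditive
  invFun χ := χ.comp e.toMonoidHom.toAdditive
  map_add' _ _ := rfl
  map_smul' _ _ := rfl
  left_inv χ := by ext; simp
  right_inv χ := by ext; simp

theorem cupVanishes_characterCongr (e : G ≃* H) {χ η : Additive G →+ R} :
    CupVanishes (characterCongr R e χ) (characterCongr R e η) ↔ CupVanishes χ η := by
  refine ⟨fun h => ?_, fun h => h.comp e.symm.toMonoidHom⟩
  rw [← (characterCongr R e).symm_apply_apply χ, ← (characterCongr R e).symm_apply_apply η]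
  exact h.comp e.toMonoidHom

end Characters

section EdgewiseDependent

variable {V R : Type*} [CommRing R] {Γ : SimpleGraph V} {α β : V → R} {s x : V}

/-- The vectors `(α u, β u)` and `(α v, β v)` are linearly dependent for every edge `uv`, in the
sense that their determinant vanishes. -/
def EdgewiseDependent (Γ : SimpleGraph V) (α β : V → R) : Prop :=
  ∀ ⦃u v⦄, Γ.Adj u v → α u * β v = α v * β u

theorem EdgewiseDependent.symm (h : EdgewiseDependent Γ α β) : EdgewiseDependent Γ β α :=
  fun u v huv => by linear_combination -h huv

theorem EdgewiseDependent.apply_eq_zero [NoZeroDivisors R] (h : EdgewiseDependent Γ α β)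
    (hα : α s ≠ 0) (hβ : β s = 0) (hsx : Γ.Adj s x) : β x = 0 := by
  have := h hsx
  rw [hβ, mul_zero] at this
  exact (mul_eq_zero.mp this).resolve_left hα

theorem edgewiseDependent_single_iff [DecidableEq V] :
    EdgewiseDependent Γ (Pi.single s 1) β ↔ ∀ x, Γ.Adj s x → β x = 0 := by
  constructor
  · intro h x hsx
    simpa [Pi.single_eq_of_ne hsx.ne'] using h hsx
  · intro h u v huv
    rcases eq_or_ne u s with rfl | hu
    · simp [h v huv, Pi.single_eq_of_ne huv.ne']
    · rcases eq_or_ne v s with rfl | hv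
      · simp [h u huv.symm, Pi.single_eq_of_ne hu]
      · simp [Pi.single_eq_of_ne hu, Pi.single_eq_of_ne hv]

variable (R Γ) in
/-- Characters of `A(Γ)` are determined by their values on the vertices, which are arbitrary. -/
def vertexValues : (Additive (RAAG Γ) →+ R) ≃ₗ[R] (V → R) where
  toFun χ v := χ (.ofMul (.of v))
  invFun α := (RAAG.lift (fun v => .ofAdd (α v)) fun _ _ _ => Commute.all _ _).toAdditiveLeft
  map_add' _ _ := rfl
  map_smul' _ _ := rfl
  left_inv χ := MonoidHom.toAdditiveLeft.symm.injective (PresentedGroup.ext fun v => by simp)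
  right_inv α := by ext v; simp

@[simp]
theorem vertexValues_apply (χ : Additive (RAAG Γ) →+ R) (v : V) :
    vertexValues R Γ χ v = χ (.ofMul (.of v)) := rfl

theorem cupVanishes_iff_edgewiseDependent {χ η : Additive (RAAG Γ) →+ R} :
    CupVanishes χ η ↔ EdgewiseDependent Γ (vertexValues R Γ χ) (vertexValues R Γ η) := by
  constructor
  · rintro ⟨ψ, rfl, rfl⟩ u v huv
    exact Heisenberg.commute_iff.mp ((RAAG.commute_of_adj huv).map ψ)
  · intro h
    refine ⟨RAAG.lift (fun v => ⟨vertexValues R Γ χ v, vertexValues R Γ η v, 0⟩)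
      fun u v huv => Heisenberg.commute_iff.mpr (h huv), ?_, ?_⟩ <;>
    · apply (vertexValues R Γ).injective
      ext v
      simp [Heisenberg.fstHom, Heisenberg.sndHom]

end EdgewiseDependent

/-- A linear isomorphism which preserves and reflects the relation `EdgewiseDependent`, that is,
the vanishing of cup products of degree one classes. -/
def PreservesEdgewiseDependent {V W R : Type*} [CommRing R] (Γ : SimpleGraph V)
    (Δ : SimpleGraph W) (φ : (V → R) ≃ₗ[R] (W → R)) : Prop :=
  ∀ α β, EdgewiseDependent Δ (φ α) (φ β) ↔ EdgewiseDependent Γ α β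

theorem exists_preservesEdgewiseDependent_of_mulEquiv (R : Type*) {V W : Type*} [CommRing R]
    {Γ : SimpleGraph V} {Δ : SimpleGraph W} (e : RAAG Γ ≃* RAAG Δ) :
    ∃ φ : (V → R) ≃ₗ[R] (W → R), PreservesEdgewiseDependent Γ Δ φ := by
  refine ⟨(vertexValues R Γ).symm ≪≫ₗ characterCongr R e ≪≫ₗ vertexValues R Δ, fun α β => ?_⟩
  simp only [LinearEquiv.trans_apply, ← cupVanishes_iff_edgewiseDependent,
    cupVanishes_characterCongr]
  simp only [cupVanishes_iff_edgewiseDependent, LinearEquiv.apply_symm_apply]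

section CupAnnihilator

open Module

variable {V W R F : Type*} [CommRing R] [Field F] {Γ : SimpleGraph V} {Δ : SimpleGraph W} {s : V}

/-- The classes whose cup product with `α` vanishes. -/
def cupAnnihilator (Γ : SimpleGraph V) (α : V → R) : Submodule R (V → R) where
  carrier := {β | EdgewiseDependent Γ α β}
  zero_mem' u v _ := by simp
  add_mem' hβ hγ u v huv := by simp only [Pi.add_apply, mul_add, hβ huv, hγ huv]
  smul_mem' c β hβ u v huv := by
    simp only [Pi.smul_apply, smul_eq_mul]
    linear_combination c * hβ huv

@[simp]
theorem mem_cupAnnihilator {α β : V → R} : β ∈ cupAnnihilator Γ α ↔ EdgewiseDependent Γ α β :=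
  Iff.rfl

/-- The number of vertices not adjacent to `s`, including `s` itself. -/
noncomputable def codegree (Γ : SimpleGraph V) (s : V) : ℕ := Nat.card {x // ¬ Γ.Adj s x}

/-- Restriction of the classes in `cupAnnihilator Γ α` to the vertices not adjacent to `s`. -/
def restrictNonAdj (Γ : SimpleGraph V) (α : V → R) (s : V) :
    cupAnnihilator Γ α →ₗ[R] ({x // ¬ Γ.Adj s x} → R) :=
  (LinearMap.funLeft R R Subtype.val).domRestrict (cupAnnihilator Γ α)

@[simp]
theorem restrictNonAdj_apply {α : V → R} (β : cupAnnihilator Γ α) (x : {x // ¬ Γ.Adj s x}) :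
    restrictNonAdj Γ α s β x = (β : V → R) x := rfl

theorem restrictNonAdj_injective [NoZeroDivisors R] {α : V → R} (hs : α s ≠ 0) :
    Function.Injective (restrictNonAdj Γ α s) := by
  rw [← LinearMap.ker_eq_bot, LinearMap.ker_eq_bot']
  rintro ⟨β, hβ⟩ h
  have hnonadj : ∀ x, ¬ Γ.Adj s x → β x = 0 := fun x hx => congrFun h ⟨x, hx⟩
  ext x
  by_cases hsx : Γ.Adj s x
  · exact hβ.apply_eq_zero hs (hnonadj s Γ.irrefl) hsx
  · exact hnonadj x hsx

theorem restrictNonAdj_single_surjective [DecidableEq V] :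
    Function.Surjective (restrictNonAdj Γ (Pi.single s (1 : R)) s) := by
  intro g
  refine ⟨⟨Function.extend Subtype.val g 0, edgewiseDependent_single_iff.mpr fun x hsx => ?_⟩, ?_⟩
  · exact Function.extend_apply' _ _ _ fun ⟨y, hy⟩ => y.2 (hy ▸ hsx)
  · ext x
    exact Subtype.val_injective.extend_apply _ _ x

section Finrank

variable [Finite V]

theorem finrank_fun_nonAdj [Nontrivial R] (s : V) :
    finrank R ({x // ¬ Γ.Adj s x} → R) = codegree Γ s := by
  have := Fintype.ofFinite {x // ¬ Γ.Adj s x}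
  rw [finrank_fintype_fun_eq_card, codegree, Nat.card_eq_fintype_card]

theorem finrank_cupAnnihilator_le [IsDomain R] {α : V → R} (hs : α s ≠ 0) :
    finrank R (cupAnnihilator Γ α) ≤ codegree Γ s := by
  rw [← finrank_fun_nonAdj (R := R)]
  exact LinearMap.finrank_le_finrank_of_injective (restrictNonAdj_injective hs)

theorem finrank_cupAnnihilator_single [IsDomain R] [DecidableEq V] (s : V) :
    finrank R (cupAnnihilator Γ (Pi.single s (1 : R))) = codegree Γ s := by
  rw [← finrank_fun_nonAdj (R := R)]
  exact (LinearEquiv.ofBijective _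
    ⟨restrictNonAdj_injective (by simp), restrictNonAdj_single_surjective⟩).finrank_eq

/-- In other words, `s` dominates every vertex `y` of the support of `α`: the link of `y` is
contained in the star of `s`. -/
theorem eq_or_adj_of_finrank_cupAnnihilator_eq {α : V → F} {x y : V} (hs : α s ≠ 0)
    (h : finrank F (cupAnnihilator Γ α) = codegree Γ s) (hy : α y ≠ 0) (hyx : Γ.Adj y x) :
    x = s ∨ Γ.Adj s x := by
  classical
  by_contra! hx
  rw [← finrank_fun_nonAdj (R := F)] at h
  obtain ⟨⟨δ, hδ⟩, hδsingle⟩ := (LinearMap.injective_iff_surjective_of_finrank_eq_finrank h).mp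
    (restrictNonAdj_injective hs) (Pi.single ⟨x, hx.2⟩ 1)
  have hδx : δ x = 1 := by
    simpa using congrFun hδsingle ⟨x, hx.2⟩
  have hδ_nonadj : ∀ z, z ≠ x → ¬ Γ.Adj s z → δ z = 0 := fun z hzx hz => by
    simpa [hzx] using congrFun hδsingle ⟨z, hz⟩
  have hδy : δ y = 0 := by
    by_cases hsy : Γ.Adj s y
    · exact hδ.apply_eq_zero hs (hδ_nonadj s hx.1.symm Γ.irrefl) hsy
    · exact hδ_nonadj y hyx.ne hsy
  have := hδ.apply_eq_zero hy hδy hyx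
  exact one_ne_zero (hδx.symm.trans this)

theorem EdgewiseDependent.mul_eq_mul_of_finrank_eq {α β : V → F} (h : EdgewiseDependent Γ α β)
    {t x : V} (hst : Γ.Adj s t) (ht : α t ≠ 0) (hx : α x ≠ 0)
    (hfin : finrank F (cupAnnihilator Γ α) = codegree Γ x) : α s * β x = α x * β s := by
  rcases eq_or_adj_of_finrank_cupAnnihilator_eq hx hfin ht hst.symm with rfl | hxs
  · rfl
  · exact (h hxs).symm

theorem EdgewiseDependent.mul_eq_mul_of_codegree_le {α β : V → F} (h : EdgewiseDependent Γ α β)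
    {k : ℕ} (hα : finrank F (cupAnnihilator Γ α) = k) (hβ : finrank F (cupAnnihilator Γ β) = k)
    {t x : V} (hst : Γ.Adj s t) (hαt : α t ≠ 0) (hβt : β t ≠ 0) (hx : codegree Γ x ≤ k) :
    α s * β x = α x * β s := by
  by_cases hαx : α x = 0
  · by_cases hβx : β x = 0
    · simp [hαx, hβx]
    · have hfin := (finrank_cupAnnihilator_le hβx).antisymm (hx.trans_eq hβ.symm)
      linear_combination -h.symm.mul_eq_mul_of_finrank_eq hst hβt hβx hfin
  · have hfin := (finrank_cupAnnihilator_le hαx).antisymm (hx.trans_eq hα.symm)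
    exact h.mul_eq_mul_of_finrank_eq hst hαt hαx hfin

end Finrank

namespace PreservesEdgewiseDependent

theorem symm {φ : (V → R) ≃ₗ[R] (W → R)} (hφ : PreservesEdgewiseDependent Γ Δ φ) :
    PreservesEdgewiseDependent Δ Γ φ.symm := fun α β => by
  simp [← hφ (φ.symm α)]

theorem finrank_cupAnnihilator_eq {φ : (V → R) ≃ₗ[R] (W → R)}
    (hφ : PreservesEdgewiseDependent Γ Δ φ) (α : V → R) :
    finrank R (cupAnnihilator Δ (φ α)) = finrank R (cupAnnihilator Γ α) := by
  have hmap : cupAnnihilator Δ (φ α) = (cupAnnihilator Γ α).map (φ : (V → R) →ₗ[R] (W → R)) := by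
    ext β
    obtain ⟨β, rfl⟩ := φ.surjective β
    simp [hφ α β]
  rw [hmap]
  exact φ.finrank_map_eq _

variable [Finite V] [Finite W]

theorem codegree_le_of_apply_single_ne_zero [IsDomain R] [DecidableEq V]
    {φ : (V → R) ≃ₗ[R] (W → R)} (hφ : PreservesEdgewiseDependent Γ Δ φ) {v : V} {w : W}
    (h : φ (Pi.single v 1) w ≠ 0) : codegree Γ v ≤ codegree Δ w := by
  rw [← finrank_cupAnnihilator_single (R := R), ← hφ.finrank_cupAnnihilator_eq]
  exact finrank_cupAnnihilator_le h

theorem exists_apply_ne_zero_codegree_le [IsDomain R] {φ : (V → R) ≃ₗ[R] (W → R)}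
    (hφ : PreservesEdgewiseDependent Γ Δ φ) {α : V → R} {v : V} (hv : α v ≠ 0) :
    ∃ w, φ α w ≠ 0 ∧ codegree Δ w ≤ codegree Γ v := by
  classical
  have := Fintype.ofFinite W
  have hsum : α = ∑ w, φ α w • φ.symm (Pi.single w 1) := by
    apply φ.injective
    simpa using pi_eq_sum_univ' (φ α)
  rw [hsum, Finset.sum_apply] at hv
  obtain ⟨w, -, hw⟩ := Finset.exists_ne_zero_of_sum_ne_zero hv
  exact ⟨w, left_ne_zero_of_mul hw,
    hφ.symm.codegree_le_of_apply_single_ne_zero (right_ne_zero_of_mul hw)⟩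

theorem codegree_apply_eq [IsDomain R] [DecidableEq V] {φ : (V → R) ≃ₗ[R] (W → R)}
    (hφ : PreservesEdgewiseDependent Γ Δ φ) {σ : V ≃ W}
    (hσ : ∀ v, φ (Pi.single v 1) (σ v) ≠ 0) (v : V) : codegree Δ (σ v) = codegree Γ v := by
  classical
  obtain ⟨τ, hτ⟩ := exists_equiv_forall_apply_single_ne_zero φ.symm
  have hle : ∀ v, codegree Γ v ≤ codegree Δ (σ v) := fun v =>
    hφ.codegree_le_of_apply_single_ne_zero (hσ v)
  have hge : ∀ w, codegree Δ w ≤ codegree Γ (τ w) := fun w =>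
    hφ.symm.codegree_le_of_apply_single_ne_zero (hτ w)
  exact (apply_equiv_le_of_forall_le σ τ hle hge v).antisymm (hle v)

variable {φ : (V → F) ≃ₗ[F] (W → F)}

theorem adj_of_adj_apply [DecidableEq V] (hφ : PreservesEdgewiseDependent Γ Δ φ) {σ : V ≃ W}
    (hσ : ∀ v, φ (Pi.single v 1) (σ v) ≠ 0) {v w : V} (hadj : Δ.Adj (σ v) (σ w)) :
    Γ.Adj v w := by
  by_contra hvw
  have hne : v ≠ w := fun h => hadj.ne (congrArg σ h)
  set α := φ (Pi.single v 1) with hα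
  set β := φ (Pi.single w 1) with hβ
  have hαβ : EdgewiseDependent Δ α β := (hφ _ _).mpr <| edgewiseDependent_single_iff.mpr
    fun x hvx => Pi.single_eq_of_ne (ne_of_apply_ne (Γ.Adj v) fun h => hvw (h.mp hvx)) _
  have hprod : α (σ w) * β (σ v) ≠ 0 := hαβ hadj ▸ mul_ne_zero (hσ v) (hσ w)
  have hαw : α (σ w) ≠ 0 := left_ne_zero_of_mul hprod
  have hβv : β (σ v) ≠ 0 := right_ne_zero_of_mul hprod
  have hcodegree : codegree Γ w = codegree Γ v := le_antisymm
    ((hφ.codegree_le_of_apply_single_ne_zero hβv).trans_eq (hφ.codegree_apply_eq hσ v))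
    ((hφ.codegree_le_of_apply_single_ne_zero hαw).trans_eq (hφ.codegree_apply_eq hσ w))
  have hfinα : finrank F (cupAnnihilator Δ α) = codegree Γ v := by
    rw [hα, hφ.finrank_cupAnnihilator_eq, finrank_cupAnnihilator_single]
  have hfinβ : finrank F (cupAnnihilator Δ β) = codegree Γ v := by
    rw [hβ, hφ.finrank_cupAnnihilator_eq, finrank_cupAnnihilator_single, hcodegree]
  -- `φ γ` vanishes at all vertices of codegree at most `codegree v`, although `γ v ≠ 0`.
  let γ : V → F := α (σ v) • Pi.single w 1 - β (σ v) • Pi.single v 1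
  have hγv : γ v ≠ 0 := by simpa [γ, Pi.single_eq_of_ne hne] using hβv
  obtain ⟨x, hx, hle⟩ := hφ.exists_apply_ne_zero_codegree_le hγv
  have hφγ : φ γ x = α (σ v) * β x - α x * β (σ v) := by simp [γ, hα, hβ, mul_comm]
  rw [hφγ, sub_ne_zero] at hx
  exact hx (hαβ.mul_eq_mul_of_codegree_le hfinα hfinβ hadj hαw (hσ w) hle)

theorem nonempty_iso (hφ : PreservesEdgewiseDependent Γ Δ φ) : Nonempty (Γ ≃g Δ) := by
  classical
  obtain ⟨σ, hσ⟩ := exists_equiv_forall_apply_single_ne_zero φ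
  refine ⟨⟨σ, fun {v w} => ⟨hφ.adj_of_adj_apply hσ, fun hvw => ?_⟩⟩⟩
  let f : {x // ¬ Γ.Adj v x} → {y // ¬ Δ.Adj (σ v) y} :=
    Subtype.map σ fun _ => mt (hφ.adj_of_adj_apply hσ)
  have hf : Function.Bijective f := (Nat.bijective_iff_injective_and_card f).mpr
    ⟨Subtype.map_injective _ σ.injective, (hφ.codegree_apply_eq hσ v).symm⟩
  by_contra hnadj
  obtain ⟨⟨x, hx⟩, hfx⟩ := hf.surjective ⟨σ w, hnadj⟩
  have hxw : x = w := σ.injective (congrArg Subtype.val hfx)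
  exact hx (hxw ▸ hvw)

end PreservesEdgewiseDependent

end CupAnnihilator

/-- Rigidity of right-angled Artin groups (Droms): `A(Γ) ≅ A(Δ)` as groups if and
only if `Γ ≅ Δ` as graphs. -/
theorem raag_rigidity {V W : Type*} [Fintype V] [Fintype W]
    (Γ : SimpleGraph V) (Δ : SimpleGraph W) :
    Nonempty (PresentedGroup (raagRels Γ) ≃* PresentedGroup (raagRels Δ)) ↔
      Nonempty (Γ ≃g Δ) := by
  constructor
  · rintro ⟨e⟩
    obtain ⟨φ, hφ⟩ := exists_preservesEdgewiseDependent_of_mulEquiv ℚ e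
    exact hφ.nonempty_iso
  · rintro ⟨e⟩
    exact ⟨RAAG.congr e⟩
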